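/- Coeffect soundness for CBPV: let Γ be a context and ρ an environment mapping every variable in the domain of Γ to a closed value of the expected type (i.e., Γ ⊨ ρ in the coeffect logical relation). Then (1) if γ·Γ ⊢ V : A, then γ·ρ ⊢ V ⇓ W for some closed value W; (2) if γ·Γ ⊢ M : B, then γ·ρ ⊢ M ⇓ T for some closed terminal computation T. -/

import Mathlib

set_option autoImplicit false

/-- A preordered semiring of grades `(Q, +, 0, ·, 1, ≤co)`,
where `≤co` is a preorder respected by `+` and `·`. -/
structure CoSig (Q : Type) where
  add : Q → Q → Q
  zero : Q
  mul : Q → Q → Q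
  one : Q
  le : Q → Q → Prop
  add_assoc : ∀ a b c, add (add a b) c = add a (add b c)
  add_comm : ∀ a b, add a b = add b a
  add_zero : ∀ a, add a zero = a
  mul_assoc : ∀ a b c, mul (mul a b) c = mul a (mul b c)
  one_mul : ∀ a, mul one a = a
  mul_one : ∀ a, mul a one = a
  zero_mul : ∀ a, mul zero a = zero
  mul_zero : ∀ a, mul a zero = zero
  left_distrib : ∀ a b c, mul a (add b c) = add (mul a b) (mul a c)
  right_distrib : ∀ a b c, mul (add a b) c = add (mul a c) (mul b c)
  le_refl : ∀ a, le a a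
  le_trans : ∀ a b c, le a b → le b c → le a c
  add_le_add : ∀ a b c d, le a b → le c d → le (add a c) (add b d)
  mul_le_mul : ∀ a b c d, le a b → le c d → le (mul a c) (mul b d)

namespace CBPVCo

/-- Pointwise comparison of grade vectors: `γ₁ ≤co γ₂`. -/
def vle {Q : Type} (S : CoSig Q) (γ₁ γ₂ : List Q) : Prop := List.Forall₂ S.le γ₁ γ₂

/-- Pointwise addition of grade vectors. -/
def vadd {Q : Type} (S : CoSig Q) (γ₁ γ₂ : List Q) : List Q := List.zipWith S.add γ₁ γ₂

/-- Pointwise scaling of a grade vector: `q·γ`. -/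
def vscale {Q : Type} (S : CoSig Q) (q : Q) (γ : List Q) : List Q := γ.map (S.mul q)

/-- `γ ≤co 0̄`: every entry of the grade vector is discardable. -/
def leZero {Q : Type} (S : CoSig Q) (γ : List Q) : Prop := ∀ q ∈ γ, S.le q S.zero

mutual
/-- CBPV value types (coeffect version): `unit`, thunks `U B`, positive products. -/
inductive VTy (Q : Type) : Type where
  | unit : VTy Q
  | thunk : CTy Q → VTy Q
  | prod : VTy Q → VTy Q → VTy Q
/-- CBPV computation types (coeffect version): graded functions `A^q → B`,
graded returners `F_q A`, negative products. -/
inductive CTy (Q : Type) : Type where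
  | arr : VTy Q → Q → CTy Q → CTy Q
  | F : Q → VTy Q → CTy Q
  | wth : CTy Q → CTy Q → CTy Q
end

mutual
/-- CBPV values (de Bruijn indices for variables). -/
inductive Val (Q : Type) : Type where
  | var : Nat → Val Q
  | unit : Val Q
  | thunk : Comp Q → Val Q
  | pair : Val Q → Val Q → Val Q
/-- CBPV computations, with grade annotations on binders and on `return`. -/
inductive Comp (Q : Type) : Type where
  | lam : Q → Comp Q → Comp Q
  | app : Comp Q → Val Q → Comp Q
  | force : Val Q → Comp Q
  | split : Q → Val Q → Comp Q → Comp Q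
  | cpair : Comp Q → Comp Q → Comp Q
  | fst : Comp Q → Comp Q
  | snd : Comp Q → Comp Q
  | ret : Q → Val Q → Comp Q
  | letin : Q → Comp Q → Comp Q → Comp Q
end

mutual
/-- The value typing judgment `γ·Γ ⊢ V : A` of the CBPV type-and-coeffect system. -/
inductive VHasTy {Q : Type} (S : CoSig Q) : List Q → List (VTy Q) → Val Q → VTy Q → Prop where
  | var : ∀ {γ : List Q} {Γ : List (VTy Q)} {x : Nat} {q : Q} {A : VTy Q},
      γ.length = Γ.length → Γ[x]? = some A → γ[x]? = some q → S.le q S.one →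
      (∀ (i : Nat) (q' : Q), i ≠ x → γ[i]? = some q' → S.le q' S.zero) →
      VHasTy S γ Γ (.var x) A
  | unit : ∀ {γ : List Q} {Γ : List (VTy Q)},
      γ.length = Γ.length → leZero S γ → VHasTy S γ Γ .unit .unit
  | thunk : ∀ {γ : List Q} {Γ : List (VTy Q)} {M : Comp Q} {B : CTy Q},
      CHasTy S γ Γ M B → VHasTy S γ Γ (.thunk M) (.thunk B)
  | pair : ∀ {γ γ₁ γ₂ : List Q} {Γ : List (VTy Q)} {V₁ V₂ : Val Q} {A₁ A₂ : VTy Q},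
      VHasTy S γ₁ Γ V₁ A₁ → VHasTy S γ₂ Γ V₂ A₂ → vle S γ (vadd S γ₁ γ₂) →
      VHasTy S γ Γ (.pair V₁ V₂) (.prod A₁ A₂)

/-- The computation typing judgment `γ·Γ ⊢ M : B` of the CBPV type-and-coeffect system. -/
inductive CHasTy {Q : Type} (S : CoSig Q) : List Q → List (VTy Q) → Comp Q → CTy Q → Prop where
  | lam : ∀ {γ : List Q} {Γ : List (VTy Q)} {q : Q} {A : VTy Q} {M : Comp Q} {B : CTy Q},
      CHasTy S (q :: γ) (A :: Γ) M B → CHasTy S γ Γ (.lam q M) (.arr A q B)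
  | app : ∀ {γ γ₁ γ₂ : List Q} {Γ : List (VTy Q)} {M : Comp Q} {V : Val Q}
      {A : VTy Q} {q : Q} {B : CTy Q},
      CHasTy S γ₁ Γ M (.arr A q B) → VHasTy S γ₂ Γ V A →
      vle S γ (vadd S γ₁ (vscale S q γ₂)) → CHasTy S γ Γ (.app M V) B
  | force : ∀ {γ : List Q} {Γ : List (VTy Q)} {V : Val Q} {B : CTy Q},
      VHasTy S γ Γ V (.thunk B) → CHasTy S γ Γ (.force V) B
  | ret : ∀ {γ γ₁ : List Q} {Γ : List (VTy Q)} {q : Q} {V : Val Q} {A : VTy Q},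
      VHasTy S γ₁ Γ V A → vle S γ (vscale S q γ₁) → CHasTy S γ Γ (.ret q V) (.F q A)
  | letin : ∀ {γ γ₁ γ₂ : List Q} {Γ : List (VTy Q)} {q₁ q₂ : Q} {M N : Comp Q}
      {A : VTy Q} {B : CTy Q},
      CHasTy S γ₁ Γ M (.F q₁ A) → CHasTy S (S.mul q₁ q₂ :: γ₂) (A :: Γ) N B →
      vle S γ (vadd S (vscale S q₂ γ₁) γ₂) → CHasTy S γ Γ (.letin q₂ M N) B
  | split : ∀ {γ γ₁ γ₂ : List Q} {Γ : List (VTy Q)} {q : Q} {V : Val Q}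
      {A₁ A₂ : VTy Q} {N : Comp Q} {B : CTy Q},
      VHasTy S γ₁ Γ V (.prod A₁ A₂) → CHasTy S (q :: q :: γ₂) (A₂ :: A₁ :: Γ) N B →
      vle S γ (vadd S (vscale S q γ₁) γ₂) → CHasTy S γ Γ (.split q V N) B
  | cpair : ∀ {γ : List Q} {Γ : List (VTy Q)} {M₁ M₂ : Comp Q} {B₁ B₂ : CTy Q},
      CHasTy S γ Γ M₁ B₁ → CHasTy S γ Γ M₂ B₂ → CHasTy S γ Γ (.cpair M₁ M₂) (.wth B₁ B₂)
  | fst : ∀ {γ : List Q} {Γ : List (VTy Q)} {M : Comp Q} {B₁ B₂ : CTy Q},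
      CHasTy S γ Γ M (.wth B₁ B₂) → CHasTy S γ Γ (.fst M) B₁
  | snd : ∀ {γ : List Q} {Γ : List (VTy Q)} {M : Comp Q} {B₁ B₂ : CTy Q},
      CHasTy S γ Γ M (.wth B₁ B₂) → CHasTy S γ Γ (.snd M) B₂
end

/-- Closed values: closures (capturing a grade vector and an environment),
unit, and pairs of closed values. -/
inductive CloVal (Q : Type) : Type where
  | clo : List Q → List (CloVal Q) → Comp Q → CloVal Q
  | unit : CloVal Q
  | pair : CloVal Q → CloVal Q → CloVal Q

/-- Closed terminal computations. -/
inductive Terminal (Q : Type) : Type where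
  | ret : Q → CloVal Q → Terminal Q
  | lamClo : List Q → List (CloVal Q) → Q → Comp Q → Terminal Q
  | cpairClo : List Q → List (CloVal Q) → Comp Q → Comp Q → Terminal Q

/-- The coeffect-instrumented value judgment `γ·ρ ⊢ V ⇓ W`. -/
inductive EvalVal {Q : Type} (S : CoSig Q) :
    List Q → List (CloVal Q) → Val Q → CloVal Q → Prop where
  | var : ∀ {γ : List Q} {ρ : List (CloVal Q)} {x : Nat} {q : Q} {W : CloVal Q},
      γ.length = ρ.length → ρ[x]? = some W → γ[x]? = some q → S.le q S.one →
      (∀ (i : Nat) (q' : Q), i ≠ x → γ[i]? = some q' → S.le q' S.zero) →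
      EvalVal S γ ρ (.var x) W
  | unit : ∀ {γ : List Q} {ρ : List (CloVal Q)},
      γ.length = ρ.length → leZero S γ → EvalVal S γ ρ .unit .unit
  | thunk : ∀ {γ γ' : List Q} {ρ : List (CloVal Q)} {M : Comp Q},
      vle S γ γ' → EvalVal S γ ρ (.thunk M) (.clo γ' ρ M)
  | pair : ∀ {γ γ₁ γ₂ : List Q} {ρ : List (CloVal Q)} {V₁ V₂ : Val Q} {W₁ W₂ : CloVal Q},
      EvalVal S γ₁ ρ V₁ W₁ → EvalVal S γ₂ ρ V₂ W₂ → vle S γ (vadd S γ₁ γ₂) →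
      EvalVal S γ ρ (.pair V₁ V₂) (.pair W₁ W₂)

/-- The coeffect-instrumented big-step judgment `γ·ρ ⊢ M ⇓ T`. -/
inductive EvalComp {Q : Type} (S : CoSig Q) :
    List Q → List (CloVal Q) → Comp Q → Terminal Q → Prop where
  | lam : ∀ {γ γ' : List Q} {ρ : List (CloVal Q)} {q : Q} {M : Comp Q},
      vle S γ γ' → EvalComp S γ ρ (.lam q M) (.lamClo γ' ρ q M)
  | cpair : ∀ {γ γ' : List Q} {ρ : List (CloVal Q)} {M₁ M₂ : Comp Q},
      vle S γ γ' → EvalComp S γ ρ (.cpair M₁ M₂) (.cpairClo γ' ρ M₁ M₂)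
  | ret : ∀ {γ γ₁ : List Q} {ρ : List (CloVal Q)} {q : Q} {V : Val Q} {W : CloVal Q},
      EvalVal S γ₁ ρ V W → vle S γ (vscale S q γ₁) →
      EvalComp S γ ρ (.ret q V) (.ret q W)
  | app : ∀ {γ γ₁ γ₂ γ' : List Q} {ρ ρ' : List (CloVal Q)} {M M' : Comp Q}
      {V : Val Q} {W : CloVal Q} {q : Q} {T : Terminal Q},
      EvalComp S γ₁ ρ M (.lamClo γ' ρ' q M') → EvalVal S γ₂ ρ V W →
      EvalComp S (q :: γ') (W :: ρ') M' T → vle S γ (vadd S γ₁ (vscale S q γ₂)) →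
      EvalComp S γ ρ (.app M V) T
  | force : ∀ {γ γ' : List Q} {ρ ρ' : List (CloVal Q)} {V : Val Q} {M : Comp Q} {T : Terminal Q},
      EvalVal S γ ρ V (.clo γ' ρ' M) → EvalComp S γ' ρ' M T → EvalComp S γ ρ (.force V) T
  | letin : ∀ {γ γ₁ γ₂ : List Q} {ρ : List (CloVal Q)} {q₁ q₂ : Q} {M N : Comp Q}
      {W : CloVal Q} {T : Terminal Q},
      EvalComp S γ₁ ρ M (.ret q₁ W) → EvalComp S (S.mul q₁ q₂ :: γ₂) (W :: ρ) N T →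
      vle S γ (vadd S (vscale S q₂ γ₁) γ₂) → EvalComp S γ ρ (.letin q₂ M N) T
  | split : ∀ {γ γ₁ γ₂ : List Q} {ρ : List (CloVal Q)} {q : Q} {V : Val Q}
      {W₁ W₂ : CloVal Q} {N : Comp Q} {T : Terminal Q},
      EvalVal S γ₁ ρ V (.pair W₁ W₂) → EvalComp S (q :: q :: γ₂) (W₂ :: W₁ :: ρ) N T →
      vle S γ (vadd S (vscale S q γ₁) γ₂) → EvalComp S γ ρ (.split q V N) T
  | fst : ∀ {γ γ' : List Q} {ρ ρ' : List (CloVal Q)} {M M₁ M₂ : Comp Q} {T : Terminal Q},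
      EvalComp S γ ρ M (.cpairClo γ' ρ' M₁ M₂) → EvalComp S γ' ρ' M₁ T →
      EvalComp S γ ρ (.fst M) T
  | snd : ∀ {γ γ' : List Q} {ρ ρ' : List (CloVal Q)} {M M₁ M₂ : Comp Q} {T : Terminal Q},
      EvalComp S γ ρ M (.cpairClo γ' ρ' M₁ M₂) → EvalComp S γ' ρ' M₂ T →
      EvalComp S γ ρ (.snd M) T

mutual
/-- The logical relation on closed values: `W ∈ 𝒲⟦A⟧`. -/
def WRel {Q : Type} (S : CoSig Q) : VTy Q → CloVal Q → Prop
  | .unit, W => W = CloVal.unit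
  | .thunk B, W => ∃ (γ : List Q) (ρ : List (CloVal Q)) (M : Comp Q),
      W = CloVal.clo γ ρ M ∧ ∃ (T : Terminal Q), EvalComp S γ ρ M T ∧ TRel S B T
  | .prod A₁ A₂, W => ∃ (W₁ W₂ : CloVal Q), W = CloVal.pair W₁ W₂ ∧
      WRel S A₁ W₁ ∧ WRel S A₂ W₂

/-- The logical relation on closed terminals: `T ∈ 𝒯⟦B⟧`. -/
def TRel {Q : Type} (S : CoSig Q) : CTy Q → Terminal Q → Prop
  | .F q A, T => ∃ (W : CloVal Q), T = Terminal.ret q W ∧ WRel S A W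
  | .arr A q B, T => ∃ (γ : List Q) (ρ : List (CloVal Q)) (M : Comp Q),
      T = Terminal.lamClo γ ρ q M ∧
      ∀ (W : CloVal Q), WRel S A W →
        ∃ (T' : Terminal Q), EvalComp S (q :: γ) (W :: ρ) M T' ∧ TRel S B T'
  | .wth B₁ B₂, T => ∃ (γ : List Q) (ρ : List (CloVal Q)) (M₁ M₂ : Comp Q),
      T = Terminal.cpairClo γ ρ M₁ M₂ ∧
      (∃ (T' : Terminal Q), EvalComp S γ ρ M₁ T' ∧ TRel S B₁ T') ∧
      (∃ (T' : Terminal Q), EvalComp S γ ρ M₂ T' ∧ TRel S B₂ T')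
end

/-- The logical relation on computations with graded environments: `(γ·ρ, M) ∈ ℳ⟦B⟧`. -/
def MRel {Q : Type} (S : CoSig Q) (B : CTy Q) (γ : List Q) (ρ : List (CloVal Q))
    (M : Comp Q) : Prop :=
  ∃ (T : Terminal Q), EvalComp S γ ρ M T ∧ TRel S B T

/-- The logical relation on values with graded environments: `(γ·ρ, V) ∈ 𝒱⟦A⟧`. -/
def VRel {Q : Type} (S : CoSig Q) (A : VTy Q) (γ : List Q) (ρ : List (CloVal Q))
    (V : Val Q) : Prop :=
  ∃ (W : CloVal Q), EvalVal S γ ρ V W ∧ WRel S A W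

/-- Semantic typing of environments: `Γ ⊨ ρ` — the environment maps every
variable in the domain of `Γ` to a closed value of the expected type. -/
def EnvOk {Q : Type} (S : CoSig Q) (Γ : List (VTy Q)) (ρ : List (CloVal Q)) : Prop :=
  Γ.length = ρ.length ∧
  ∀ (x : Nat) (A : VTy Q), Γ[x]? = some A →
    ∃ (W : CloVal Q), ρ[x]? = some W ∧ WRel S A W

/-- Semantic typing of values: `γ·Γ ⊨ V : A`. -/
def VSem {Q : Type} (S : CoSig Q) (γ : List Q) (Γ : List (VTy Q)) (V : Val Q)
    (A : VTy Q) : Prop :=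
  ∀ (ρ : List (CloVal Q)), EnvOk S Γ ρ → VRel S A γ ρ V

/-- Semantic typing of computations: `γ·Γ ⊨ M : B`. -/
def CSem {Q : Type} (S : CoSig Q) (γ : List Q) (Γ : List (VTy Q)) (M : Comp Q)
    (B : CTy Q) : Prop :=
  ∀ (ρ : List (CloVal Q)), EnvOk S Γ ρ → MRel S B γ ρ M

theorem vle_refl {Q : Type} (S : CoSig Q) (γ : List Q) : vle S γ γ := by
  unfold vle
  induction γ with
  | nil => exact List.Forall₂.nil
  | cons a l ih => exact List.Forall₂.cons (S.le_refl a) ih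

theorem EnvOk.cons {Q : Type} {S : CoSig Q} {Γ : List (VTy Q)} {ρ : List (CloVal Q)}
    {A : VTy Q} {W : CloVal Q} (hW : WRel S A W) (h : EnvOk S Γ ρ) :
    EnvOk S (A :: Γ) (W :: ρ) := by
  refine ⟨by simp [h.1], ?_⟩
  intro x A' hx
  cases x with
  | zero =>
    simp only [List.getElem?_cons_zero, Option.some.injEq] at hx
    subst hx
    exact ⟨W, by simp, hW⟩
  | succ n =>
    simp only [List.getElem?_cons_succ] at hx ⊢
    exact h.2 n A' hx

mutual
theorem fundV {Q : Type} {S : CoSig Q} {γ : List Q} {Γ : List (VTy Q)} {V : Val Q} {A : VTy Q}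
    (h : VHasTy S γ Γ V A) : VSem S γ Γ V A := by
  intro ρ hρ
  match h with
  | .var hl hx hq h1 h0 =>
    obtain ⟨W, hW, hr⟩ := hρ.2 _ _ hx
    exact ⟨W, .var (hl.trans hρ.1) hW hq h1 h0, hr⟩
  | .unit hl h0 => exact ⟨.unit, .unit (hl.trans hρ.1) h0, by simp [WRel]⟩
  | .thunk hM =>
    obtain ⟨T, hT, hr⟩ := fundC hM ρ hρ
    exact ⟨_, .thunk (vle_refl S γ), by simp only [WRel]; exact ⟨_, _, _, rfl, T, hT, hr⟩⟩
  | .pair hV₁ hV₂ hle =>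
    obtain ⟨W₁, e₁, r₁⟩ := fundV hV₁ ρ hρ
    obtain ⟨W₂, e₂, r₂⟩ := fundV hV₂ ρ hρ
    exact ⟨_, .pair e₁ e₂ hle, by simp only [WRel]; exact ⟨_, _, rfl, r₁, r₂⟩⟩

theorem fundC {Q : Type} {S : CoSig Q} {γ : List Q} {Γ : List (VTy Q)} {M : Comp Q} {B : CTy Q}
    (h : CHasTy S γ Γ M B) : CSem S γ Γ M B := by
  intro ρ hρ
  match h with
  | .lam hM =>
    refine ⟨_, .lam (vle_refl S γ), ?_⟩
    simp only [TRel]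
    exact ⟨_, _, _, rfl, fun W hW => fundC hM (W :: ρ) (EnvOk.cons hW hρ)⟩
  | .app hM hV hle =>
    obtain ⟨T, e, r⟩ := fundC hM ρ hρ
    obtain ⟨W, eW, rW⟩ := fundV hV ρ hρ
    simp only [TRel] at r
    obtain ⟨γ', ρ', M', rfl, hb⟩ := r
    obtain ⟨T', e', r'⟩ := hb W rW
    exact ⟨T', .app e eW e' hle, r'⟩
  | .force hV =>
    obtain ⟨W, eW, rW⟩ := fundV hV ρ hρ
    simp only [WRel] at rW
    obtain ⟨γ', ρ', M', rfl, T, e, r⟩ := rW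
    exact ⟨T, .force eW e, r⟩
  | .ret hV hle =>
    obtain ⟨W, eW, rW⟩ := fundV hV ρ hρ
    exact ⟨_, .ret eW hle, by simp only [TRel]; exact ⟨W, rfl, rW⟩⟩
  | .letin hM hN hle =>
    obtain ⟨T, e, r⟩ := fundC hM ρ hρ
    simp only [TRel] at r
    obtain ⟨W, rfl, rW⟩ := r
    obtain ⟨T', e', r'⟩ := fundC hN (W :: ρ) (EnvOk.cons rW hρ)
    exact ⟨T', .letin e e' hle, r'⟩
  | .split hV hN hle =>
    obtain ⟨W, eW, rW⟩ := fundV hV ρ hρ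
    simp only [WRel] at rW
    obtain ⟨W₁, W₂, rfl, r₁, r₂⟩ := rW
    obtain ⟨T', e', r'⟩ := fundC hN (W₂ :: W₁ :: ρ) (EnvOk.cons r₂ (EnvOk.cons r₁ hρ))
    exact ⟨T', .split eW e' hle, r'⟩
  | .cpair h₁ h₂ =>
    refine ⟨_, .cpair (vle_refl S γ), ?_⟩
    simp only [TRel]
    exact ⟨_, _, _, _, rfl, fundC h₁ ρ hρ, fundC h₂ ρ hρ⟩
  | .fst hM =>
    obtain ⟨T, e, r⟩ := fundC hM ρ hρ
    simp only [TRel] at r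
    obtain ⟨γ', ρ', M₁, M₂, rfl, ⟨T', e', r'⟩, _⟩ := r
    exact ⟨T', .fst e e', r'⟩
  | .snd hM =>
    obtain ⟨T, e, r⟩ := fundC hM ρ hρ
    simp only [TRel] at r
    obtain ⟨γ', ρ', M₁, M₂, rfl, _, ⟨T', e', r'⟩⟩ := r
    exact ⟨T', .snd e e', r'⟩
end

/-- Coeffect soundness for CBPV: given an environment providing closed values of
the expected types for all variables of `Γ`, every well-typed value evaluates to
some closed value, and every well-typed computation evaluates to some closed
terminal computation. -/
theorem coeffect_soundness {Q : Type} (S : CoSig Q) {Γ : List (VTy Q)}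
    {ρ : List (CloVal Q)} (hρ : EnvOk S Γ ρ) :
    (∀ {γ : List Q} {V : Val Q} {A : VTy Q}, VHasTy S γ Γ V A →
      ∃ (W : CloVal Q), EvalVal S γ ρ V W) ∧
    (∀ {γ : List Q} {M : Comp Q} {B : CTy Q}, CHasTy S γ Γ M B →
      ∃ (T : Terminal Q), EvalComp S γ ρ M T) := by
  constructor
  · intro γ V A h
    obtain ⟨W, e, _⟩ := fundV h ρ hρ
    exact ⟨W, e⟩
  · intro γ M B h
    obtain ⟨T, e, _⟩ := fundC h ρ hρ
    exact ⟨T, e⟩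

end CBPVCo
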